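/- Let α > 1. There exists a constant C > 0, depending only on α, such that for all real numbers b > a ≥ 1, Σ_{k=1}^∞ 1/( (k+a)^α (k+b)^α ) ≤ C a^{-(α-1)} b^{-α}. -/

import Mathlib

/-!
Since `k + b ≥ b`, each term is at most `b ^ (-α) * (k + a) ^ (-α)`, so it suffices to bound
`∑ (k + a) ^ (-α)`. The inequality `rpow_step` dominates this sum by the telescoping sum of
`(x ^ (1 - α) - (x + 1) ^ (1 - α)) / (α - 1)`, whose partial sums are at most
`a ^ (1 - α) / (α - 1)`. Hence `C = 1 / (α - 1)` works.
-/

/-- The tangent-line inequality at `x + 1` for the convex function `t ↦ t ^ (1 - α)`. -/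
lemma rpow_step (α : ℝ) (hα : 1 < α) (x : ℝ) (hx : 0 < x) :
    (α - 1) * (x + 1) ^ (-α) ≤ x ^ (-(α - 1)) - (x + 1) ^ (-(α - 1)) := by
  have hy : 0 < x + 1 := by linarith
  have hq : 0 < x / (x + 1) := div_pos hx hy
  have hlog : Real.log (x / (x + 1)) ≤ -(1 / (x + 1)) := by
    refine (Real.log_le_sub_one_of_pos hq).trans (le_of_eq ?_)
    field_simp
    ring
  have hexp : 1 + (α - 1) * (1 / (x + 1)) ≤ (x / (x + 1)) ^ (-(α - 1)) := by
    rw [Real.rpow_def_of_pos hq]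
    have h := Real.add_one_le_exp (Real.log (x / (x + 1)) * -(α - 1))
    nlinarith
  have hsplit : x ^ (-(α - 1)) = (x + 1) ^ (-(α - 1)) * (x / (x + 1)) ^ (-(α - 1)) := by
    rw [← Real.mul_rpow hy.le hq.le, mul_div_cancel₀ _ hy.ne']
  have hpow : (x + 1) ^ (-α) = (x + 1) ^ (-(α - 1)) * (1 / (x + 1)) := by
    rw [show -α = -(α - 1) - 1 by ring, Real.rpow_sub_one hy.ne']
    ring
  have h := mul_le_mul_of_nonneg_left hexp (Real.rpow_nonneg hy.le (-(α - 1)))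
  rw [hsplit, hpow]
  linarith

/-- For `α > 1` there is `C > 0` (depending only on `α`) such that for all
reals `b > a ≥ 1`, `∑_{k=1}^∞ 1/((k+a)^α (k+b)^α) ≤ C a^{-(α-1)} b^{-α}`. -/
theorem series_bound_I_alpha_ab (α : ℝ) (hα : 1 < α) :
    ∃ C : ℝ, 0 < C ∧ ∀ a b : ℝ, 1 ≤ a → a < b →
      Summable (fun k : ℕ => 1 / ((((k : ℝ) + 1) + a) ^ α * (((k : ℝ) + 1) + b) ^ α)) ∧
      (∑' k : ℕ, 1 / ((((k : ℝ) + 1) + a) ^ α * (((k : ℝ) + 1) + b) ^ α)) ≤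
        C * a ^ (-(α - 1)) * b ^ (-α) := by
  have hα' : 0 < α - 1 := by linarith
  refine ⟨1 / (α - 1), by positivity, fun a b ha hab => ?_⟩
  have ha0 : 0 < a := by linarith
  have hb0 : 0 < b := by linarith
  have hnn : ∀ k : ℕ, 0 ≤ 1 / ((((k : ℝ) + 1) + a) ^ α * (((k : ℝ) + 1) + b) ^ α) := by
    intro k; positivity
  have hterm : ∀ k : ℕ, 1 / ((((k : ℝ) + 1) + a) ^ α * (((k : ℝ) + 1) + b) ^ α) ≤
      1 / (α - 1) * b ^ (-α) *
        (((k : ℝ) + a) ^ (-(α - 1)) - (((k + 1 : ℕ) : ℝ) + a) ^ (-(α - 1))) := by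
    intro k
    have hk : (0 : ℝ) ≤ k := k.cast_nonneg
    have h1 := rpow_step α hα ((k : ℝ) + a) (by positivity)
    have e : (k : ℝ) + a + 1 = (k : ℝ) + 1 + a := by ring
    rw [e] at h1
    have h2 : (((k : ℝ) + 1) + b) ^ (-α) ≤ b ^ (-α) :=
      Real.rpow_le_rpow_of_nonpos hb0 (by linarith) (by linarith)
    have h3 : 1 / ((((k : ℝ) + 1) + a) ^ α * (((k : ℝ) + 1) + b) ^ α) =
        (((k : ℝ) + 1) + a) ^ (-α) * (((k : ℝ) + 1) + b) ^ (-α) := by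
      rw [Real.rpow_neg (by positivity), Real.rpow_neg (by positivity), one_div, mul_inv]
    rw [h3]
    push_cast
    calc (((k : ℝ) + 1) + a) ^ (-α) * (((k : ℝ) + 1) + b) ^ (-α)
        ≤ (((k : ℝ) + 1) + a) ^ (-α) * b ^ (-α) := by gcongr
      _ = 1 / (α - 1) * b ^ (-α) * ((α - 1) * (((k : ℝ) + 1) + a) ^ (-α)) := by
          field_simp
      _ ≤ _ := by gcongr
  have hsum : ∀ n : ℕ, ∑ k ∈ Finset.range n,
      1 / ((((k : ℝ) + 1) + a) ^ α * (((k : ℝ) + 1) + b) ^ α) ≤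
        1 / (α - 1) * a ^ (-(α - 1)) * b ^ (-α) := by
    intro n
    refine (Finset.sum_le_sum fun k _ => hterm k).trans ?_
    rw [← Finset.mul_sum,
      Finset.sum_range_sub' (fun k : ℕ => ((k : ℝ) + a) ^ (-(α - 1))) n]
    have hn : 0 ≤ ((n : ℝ) + a) ^ (-(α - 1)) := by positivity
    have hc : 0 ≤ 1 / (α - 1) * b ^ (-α) := by positivity
    simp only [Nat.cast_zero, zero_add]
    nlinarith [mul_nonneg hc hn]
  exact ⟨summable_of_sum_range_le hnn hsum, Real.tsum_le_of_sum_range_le hnn hsum⟩
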